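/- arXiv:1212.3567 — 3 statements merged into one kernel-verified Lean document; each statement's English description precedes it below -/
import Mathlib

section
/- Let (Ω, 𝓕, P) be a probability space, T > 0 and k ≥ 1. For each integer n ≥ 1 let X_n = {X_n(t)}_{t∈[0,T]} be a stochastic process with càdlàg paths taking values in ℝ^k, and let (a_n)_{n≥1} be a sequence of positive real numbers with a_n → 0. Fix ε > 0 and define for each n the hitting time τ_{nε}(ω) := inf{ t ∈ [0,T] : |X_n(t,ω)| ≥ ε } (with inf ∅ := T) and the stopped process X_{nε}(t) := X_n(t ∧ τ_{nε}). If sup_{t∈[0,T]} |X_{nε}(t)| = 𝒪(a_n), then sup_{t∈[0,T]} |X_n(t)| = 𝒪(a_n). -/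
open MeasureTheory ProbabilityTheory Filter Set

/-!
A right-continuous path lies in a closed set at its hitting time of that set. So if the path
stopped on entering `{v | ε ≤ ‖v‖}` has supremum below `ε`, then it never enters and stopping does
nothing. Since `ζ ω * a n → 0`, for almost every `ω` this applies to all large `n` and transfers the
bound to the unstopped paths; the finitely many remaining paths are càdlàg, hence bounded, and are
absorbed by enlarging `ζ ω`.
-/

section

open scoped Topology NNReal

variable {ι Ω E : Type*}

/-- The path `x` is càdlàg on `[r, T]`. It is a function on all of `ι`, so one-sided conditions are
imposed only at those points of `[r, T]` whose relevant neighbours lie in `[r, T]`. -/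
structure IsCadlagOn [Preorder ι] [TopologicalSpace ι] [TopologicalSpace E]
    (x : ι → E) (r T : ι) : Prop where
  continuousWithinAt_Ici : ∀ t ∈ Ico r T, ContinuousWithinAt x (Ici t) t
  exists_tendsto_nhdsLT : ∀ t ∈ Ioc r T, ∃ l, Tendsto x (𝓝[<] t) (𝓝 l)

namespace IsCadlagOn

section LinearOrder

variable [LinearOrder ι] [TopologicalSpace ι] [PseudoMetricSpace E] {x : ι → E} {r T t : ι}

lemma exists_isBounded_image_left (hx : IsCadlagOn x r T) (ht : t ∈ Icc r T) :
    ∃ U ∈ 𝓝[Icc r T ∩ Iio t] t, Bornology.IsBounded (x '' U) := by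
  rcases ht.1.eq_or_lt with rfl | hrt
  · refine ⟨∅, ?_, by simp only [image_empty, Bornology.isBounded_empty]⟩
    rw [show Icc r T ∩ Iio r = ∅ by grind, nhdsWithin_empty]
    exact mem_bot
  · obtain ⟨l, hl⟩ := hx.exists_tendsto_nhdsLT t ⟨hrt, ht.2⟩
    exact Metric.exists_isBounded_image_of_tendsto
      (hl.mono_left (nhdsWithin_mono t inter_subset_right))

lemma exists_isBounded_image_right (hx : IsCadlagOn x r T) (ht : t ∈ Icc r T) :
    ∃ U ∈ 𝓝[Icc r T ∩ Ici t] t, Bornology.IsBounded (x '' U) := by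
  rcases ht.2.eq_or_lt with rfl | htT
  · refine ⟨{t}, ?_, by simp only [image_singleton, Bornology.isBounded_singleton]⟩
    rw [show Icc r t ∩ Ici t = {t} by grind]
    exact self_mem_nhdsWithin
  · exact Metric.exists_isBounded_image_of_tendsto
      ((hx.continuousWithinAt_Ici t ⟨ht.1, htT⟩).mono inter_subset_right)

theorem isBounded_image [CompactIccSpace ι] (hx : IsCadlagOn x r T) :
    Bornology.IsBounded (x '' Icc r T) := by
  refine isCompact_Icc.induction_on (p := fun s => Bornology.IsBounded (x '' s)) ?_
    (fun _ _ hst ht => ht.subset (image_mono hst))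
    (fun s t hs ht => by simpa only [image_union] using hs.union ht) fun t ht => ?_
  · simp only [image_empty, Bornology.isBounded_empty]
  · obtain ⟨U, hU, hxU⟩ := hx.exists_isBounded_image_left ht
    obtain ⟨V, hV, hxV⟩ := hx.exists_isBounded_image_right ht
    refine ⟨U ∪ V, ?_, by simpa only [image_union] using hxU.union hxV⟩
    rw [← inter_univ (Icc r T), ← Iio_union_Ici (a := t), inter_union_distrib_left,
      nhdsWithin_union]
    exact union_mem_sup hU hV

end LinearOrder

end IsCadlagOn

lemma norm_le_biSup_norm [SeminormedAddCommGroup E] {x : ι → E} {s : Set ι} {t : ι}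
    (hx : Bornology.IsBounded (x '' s)) (ht : t ∈ s) : ‖x t‖ ≤ ⨆ u ∈ s, ‖x u‖ := by
  obtain ⟨C, hC⟩ := hx.exists_norm_le
  have hbdd : BddAbove (range fun u => ⨆ _ : u ∈ s, ‖x u‖) := by
    refine ⟨max C 0, forall_mem_range.2 fun u => Real.iSup_le (fun hu => ?_) (le_max_right _ _)⟩
    exact (hC _ (mem_image_of_mem x hu)).trans (le_max_left _ _)
  exact le_ciSup_of_le hbdd t (ciSup_pos (f := fun _ => ‖x t‖) ht).ge

section HittingTime

variable [ConditionallyCompleteLinearOrder ι] {u : ι → Ω → E} {s : Set E} {r T : ι} {ω : Ω}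

lemma hittingBtwn_eq_sInf_union_singleton :
    hittingBtwn u s r T ω = sInf ({t ∈ Icc r T | u t ω ∈ s} ∪ {T}) := by
  change _ = sInf (Icc r T ∩ {t | u t ω ∈ s} ∪ {T})
  rw [hittingBtwn]
  split_ifs with hit
  · have hne : (Icc r T ∩ {t | u t ω ∈ s}).Nonempty := hit
    have hle : sInf (Icc r T ∩ {t | u t ω ∈ s}) ≤ T := by
      obtain ⟨t, ht⟩ := hne
      exact (csInf_le bddBelow_Icc.inter_of_left ht).trans ht.1.2
    rw [csInf_union bddBelow_Icc.inter_of_left hne bddBelow_singleton (singleton_nonempty T),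
      csInf_singleton, inf_eq_left.2 hle]
  · have hempty : Icc r T ∩ {t | u t ω ∈ s} = ∅ := not_nonempty_iff_eq_empty.1 hit
    rw [hempty, empty_union, csInf_singleton]

theorem hittingBtwn_mem_of_isClosed [TopologicalSpace ι] [OrderTopology ι] [TopologicalSpace E]
    (hs : IsClosed s) (hu : ∀ t ∈ Ico r T, ContinuousWithinAt (fun t => u t ω) (Ici t) t)
    (hit : ∃ t ∈ Icc r T, u t ω ∈ s) : u (hittingBtwn u s r T ω) ω ∈ s := by
  rcases (hittingBtwn_le (u := u) (s := s) (n := r) (m := T) ω).eq_or_lt with hτ | hτ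
  · obtain ⟨t, ht, hts⟩ := hit
    have htT : t = T := ht.2.antisymm (hτ ▸ hittingBtwn_le_of_mem ht.1 ht.2 hts)
    rwa [hτ, ← htT]
  · have hglb : IsGLB (Icc r T ∩ {t | u t ω ∈ s}) (hittingBtwn u s r T ω) := by
      rw [hittingBtwn, if_pos hit]
      exact isGLB_csInf hit bddBelow_Icc.inter_of_left
    have hfreq : ∃ᶠ t in 𝓝[≥] hittingBtwn u s r T ω, u t ω ∈ s :=
      (hglb.frequently_mem hit).mono fun _ => And.right
    exact hs.mem_of_frequently_of_tendsto hfreq (hu _ ⟨le_hittingBtwn_of_exists hit, hτ⟩)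

end HittingTime

section StoppedPath

variable [ConditionallyCompleteLinearOrder ι] [TopologicalSpace ι] [OrderTopology ι]
  [SeminormedAddCommGroup E] {r T : ι} {ω : Ω} {ε : ℝ}

theorem min_hittingBtwn_eq_left_of_biSup_lt {u : ι → Ω → E}
    (hu : IsCadlagOn (fun t => u t ω) r T)
    (hsup : ⨆ t ∈ Icc r T, ‖u (min t (hittingBtwn u {v | ε ≤ ‖v‖} r T ω)) ω‖ < ε)
    {t : ι} (ht : t ∈ Icc r T) : min t (hittingBtwn u {v | ε ≤ ‖v‖} r T ω) = t := by
  have hrT : r ≤ T := ht.1.trans ht.2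
  set τ := hittingBtwn u {v | ε ≤ ‖v‖} r T ω with hτ
  have hτ_mem : τ ∈ Icc r T := hittingBtwn_mem_Icc hrT ω
  have hbdd : Bornology.IsBounded ((fun t => u (min t τ) ω) '' Icc r T) := by
    refine hu.isBounded_image.subset (image_subset_iff.2 fun t ht => ?_)
    exact ⟨min t τ, ⟨le_min ht.1 hτ_mem.1, (min_le_left _ _).trans ht.2⟩, rfl⟩
  have hlt : ‖u τ ω‖ < ε := by
    simpa only [min_self] using (norm_le_biSup_norm hbdd hτ_mem).trans_lt hsup
  have hnot : ¬∃ t ∈ Icc r T, u t ω ∈ {v | ε ≤ ‖v‖} := fun hit =>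
    hlt.not_ge <| hittingBtwn_mem_of_isClosed (isClosed_le continuous_const continuous_norm)
      hu.continuousWithinAt_Ici hit
  rw [hτ, hittingBtwn, if_neg hnot, min_eq_left ht.2]

theorem exists_nnreal_norm_le_mul_of_stopped_le {X : ℕ → ι → Ω → E}
    (hX : ∀ n, IsCadlagOn (fun t => X n t ω) r T)
    {a : ℕ → ℝ} (ha : ∀ n, 1 ≤ n → 0 < a n) (ha0 : Tendsto a atTop (𝓝 0)) (hε : 0 < ε) {z : ℝ}
    (hz : ∀ n, 1 ≤ n →
      ⨆ t ∈ Icc r T, ‖X n (min t (hittingBtwn (X n) {v | ε ≤ ‖v‖} r T ω)) ω‖ ≤ z * a n) :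
    ∃ C : ℝ≥0, ∀ n, 1 ≤ n → ∀ t ∈ Icc r T, ‖X n t ω‖ ≤ C * a n := by
  set S : ℕ → ℝ := fun n => ⨆ t ∈ Icc r T, ‖X n t ω‖
  have hS_nonneg : ∀ n, 0 ≤ S n := fun n =>
    Real.iSup_nonneg fun _ => Real.iSup_nonneg fun _ => norm_nonneg _
  have hz_lt : ∀ᶠ n in atTop, z * a n < ε := by
    have hlim : Tendsto (fun n => z * a n) atTop (𝓝 0) := by
      simpa only [mul_zero] using ha0.const_mul z
    exact hlim.eventually_lt_const hε
  have hS_le : ∀ᶠ n in atTop, S n ≤ z * a n := by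
    filter_upwards [hz_lt, eventually_ge_atTop 1] with n hn hn1
    have hunstopped := fun t (ht : t ∈ Icc r T) =>
      min_hittingBtwn_eq_left_of_biSup_lt (hX n) ((hz n hn1).trans_lt hn) ht
    refine le_of_eq_of_le ?_ (hz n hn1)
    exact iSup_congr fun t => iSup_congr fun ht => by rw [hunstopped t ht]
  have hS_isBigO : S =O[atTop] a := by
    refine .of_bound |z| (hS_le.mono fun n hn => ?_)
    rw [Real.norm_of_nonneg (hS_nonneg n), Real.norm_eq_abs, ← abs_mul]
    exact hn.trans (le_abs_self _)
  obtain ⟨C, hC, hSC⟩ := Asymptotics.bound_of_isBigO_nat_atTop hS_isBigO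
  refine ⟨⟨C, hC.le⟩, fun n hn t ht => ?_⟩
  calc ‖X n t ω‖ ≤ S n := norm_le_biSup_norm (hX n).isBounded_image ht
    _ ≤ ‖S n‖ := le_abs_self _
    _ ≤ C * ‖a n‖ := hSC (ha n hn).ne'
    _ = C * a n := by rw [Real.norm_of_nonneg (ha n hn).le]

theorem stopped_sup_bigO_general [MeasurableSpace Ω] {μ : Measure Ω} {X : ℕ → ι → Ω → E}
    (hX : ∀ n ω, IsCadlagOn (fun t => X n t ω) r T)
    {a : ℕ → ℝ} (ha : ∀ n, 1 ≤ n → 0 < a n) (ha0 : Tendsto a atTop (𝓝 0)) (hε : 0 < ε)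
    {τ : ℕ → Ω → ι} (hτ : ∀ n ω, τ n ω = hittingBtwn (X n) {v | ε ≤ ‖v‖} r T ω)
    (h : ∃ ζ : Ω → ℝ, ∀ n, 1 ≤ n → ∀ᵐ ω ∂μ,
      ⨆ t ∈ Icc r T, ‖X n (min t (τ n ω)) ω‖ ≤ ζ ω * a n) :
    ∃ ζ : Ω → ℝ≥0, ∀ n, 1 ≤ n → ∀ᵐ ω ∂μ, ∀ t ∈ Icc r T, ‖X n t ω‖ ≤ ζ ω * a n := by
  obtain ⟨ζ, hζ⟩ := h
  have hζ_all : ∀ᵐ ω ∂μ, ∀ n, 1 ≤ n →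
      ⨆ t ∈ Icc r T, ‖X n (min t (τ n ω)) ω‖ ≤ ζ ω * a n :=
    ae_all_iff.2 fun n => eventually_imp_distrib_left.2 (hζ n)
  simp only [hτ] at hζ_all
  choose! C hC using fun ω =>
    exists_nnreal_norm_le_mul_of_stopped_le (z := ζ ω) (hX · ω) ha ha0 hε
  exact ⟨C, fun n hn => hζ_all.mono fun ω hω => hC ω hω n hn⟩

end StoppedPath

end

/-- If the stopped processes `X_{nε}` (stopped at the hitting time of
level `ε`) satisfy `sup_{t ∈ [0,T]} |X_{nε}(t)| = 𝒪(a_n)` (in the almost sure sense, with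
an almost surely finite random constant), then `sup_{t ∈ [0,T]} |X_n(t)| = 𝒪(a_n)`. -/
theorem stopped_sup_bigO
    {Ω : Type*} [MeasureSpace Ω] [IsProbabilityMeasure (ℙ : Measure Ω)]
    (T : ℝ) (hT : 0 < T) (k : ℕ) (hk : 1 ≤ k)
    (X : ℕ → ℝ → Ω → EuclideanSpace ℝ (Fin k))
    -- càdlàg paths: right-continuity on [0,T)
    (hrc : ∀ n ω, ∀ t ∈ Set.Ico (0:ℝ) T,
      ContinuousWithinAt (fun s => X n s ω) (Set.Ici t) t)
    -- càdlàg paths: existence of left limits on (0,T]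
    (hll : ∀ n ω, ∀ t ∈ Set.Ioc (0:ℝ) T,
      ∃ l, Tendsto (fun s => X n s ω) (nhdsWithin t (Set.Iio t)) (nhds l))
    -- the positive numerical sequence aₙ with aₙ → 0
    (a : ℕ → ℝ) (ha : ∀ n, 1 ≤ n → 0 < a n) (ha0 : Tendsto a atTop (nhds 0))
    (ε : ℝ) (hε : 0 < ε)
    -- hitting time of level ε, with inf ∅ := T
    (τ : ℕ → Ω → ℝ)
    (hτ : ∀ n ω, τ n ω = sInf ({t ∈ Set.Icc (0:ℝ) T | ε ≤ ‖X n t ω‖} ∪ {T}))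
    -- sup of the stopped process is 𝒪(aₙ)
    (h : ∃ ζ : Ω → ℝ, (∀ ω, 0 ≤ ζ ω) ∧ ∀ n : ℕ, 1 ≤ n → ∀ᵐ ω ∂(ℙ : Measure Ω),
      (⨆ t ∈ Set.Icc (0:ℝ) T, ‖X n (min t (τ n ω)) ω‖) ≤ ζ ω * a n) :
    ∃ ζ : Ω → ℝ, (∀ ω, 0 ≤ ζ ω) ∧ ∀ n : ℕ, 1 ≤ n → ∀ᵐ ω ∂(ℙ : Measure Ω),
      (⨆ t ∈ Set.Icc (0:ℝ) T, ‖X n t ω‖) ≤ ζ ω * a n := by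
  obtain ⟨ζ, hζ⟩ := stopped_sup_bigO_general (fun n ω => ⟨hrc n ω, hll n ω⟩) ha ha0 hε
    (fun n ω => (hτ n ω).trans hittingBtwn_eq_sInf_union_singleton.symm)
    (h.imp fun _ => And.right)
  refine ⟨fun ω => ζ ω, fun ω => (ζ ω).2, fun n hn => (hζ n hn).mono fun ω hω => ?_⟩
  have hbound : 0 ≤ ζ ω * a n := mul_nonneg (ζ ω).2 (ha n hn).le
  exact Real.iSup_le (fun t => Real.iSup_le (hω t) hbound) hbound
end

section
/- Let (Ω, 𝓕, P) be a probability space equipped with a filtration (𝓕_t)_{t∈[0,T]}, where T ∈ [0,∞). Let f = {f_t}_{t∈[0,T]} and g = {g_t}_{t∈[0,T]} be nonnegative continuous adapted real-valued processes such that for every constant c > 0 and every stopping time τ with τ ≤ T almost surely one has E[ f_τ · 1_{{g_0 ≤ c}} ] ≤ E[ g_τ · 1_{{g_0 ≤ c}} ]. Then for every stopping time τ ≤ T and every γ ∈ (0,1), E[ sup_{t ≤ τ} f_t^γ ] ≤ ((2−γ)/(1−γ)) · E[ sup_{t ≤ τ} g_t^γ ]. -/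
open MeasureTheory Filter Set

/-!
Let `F` and `G` be the running suprema of `f` and `g` up to `τ`. Stop at the first time `σ ≤ τ` at
which `f` or `g` reaches the level `x`. If `G < x ≤ F`, it is `f` that reaches `x`, so `x ≤ f σ`;
and `g σ ≤ min G x` as soon as `g 0 ≤ x`. Markov's inequality and the domination hypothesis at `σ`
thus give `x * P (G < x ≤ F) ≤ E[min G x]`. Multiplying by `γ * x ^ (γ - 2)` and integrating over
`x > 0`, where `E[min G x] = ∫ s in 0..x, P (s ≤ G)`, turns this tail bound into
`E[F ^ γ] ≤ (1 + 1 / (1 - γ)) * E[G ^ γ]`.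
-/

section Hitting

variable {Ω ι β : Type*} [ConditionallyCompleteLinearOrder ι] [TopologicalSpace ι] [OrderTopology ι]
  [TopologicalSpace β] {u : ι → Ω → β} {s : Set β} {a b : ι} {ω : Ω}

lemma apply_hittingBtwn_mem_of_isClosed (hs : IsClosed s) (hu : ContinuousOn (u · ω) (Icc a b))
    (h : ∃ t ∈ Icc a b, u t ω ∈ s) : u (hittingBtwn u s a b ω) ω ∈ s := by
  rw [hittingBtwn, if_pos h]
  exact ((hu.preimage_isClosed_of_isClosed isClosed_Icc hs).csInf_mem h
    bddBelow_Icc.inter_of_left).2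

lemma hittingBtwn_le_iff_of_isClosed (hs : IsClosed s) (hu : ContinuousOn (u · ω) (Icc a b))
    {i : ι} : hittingBtwn u s a b ω ≤ i ↔ b ≤ i ∨ ∃ t ∈ Icc a i, u t ω ∈ s := by
  constructor
  · intro hi
    by_cases h : ∃ t ∈ Icc a b, u t ω ∈ s
    · exact .inr ⟨_, ⟨le_hittingBtwn_of_exists h, hi⟩, apply_hittingBtwn_mem_of_isClosed hs hu h⟩
    · rw [hittingBtwn, if_neg h] at hi
      exact .inl hi
  · rintro (hb | ⟨t, ht, hts⟩)
    · exact (hittingBtwn_le ω).trans hb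
    · rcases le_total t b with htb | hbt
      · exact (hittingBtwn_le_of_mem ht.1 htb hts).trans ht.2
      · exact ((hittingBtwn_le ω).trans hbt).trans ht.2

lemma apply_hittingBtwn_Ici_le [DenselyOrdered ι] [LinearOrder β] [OrderClosedTopology β]
    {v : ι → Ω → β} {x : β} (hab : a ≤ b) (hv : ContinuousOn (v · ω) (Icc a b))
    (hvu : ∀ t ∈ Icc a b, v t ω ≤ u t ω) (hva : v a ω ≤ x) :
    v (hittingBtwn u (Ici x) a b ω) ω ≤ x := by
  set σ := hittingBtwn u (Ici x) a b ω
  have hσ : σ ∈ Icc a b := hittingBtwn_mem_Icc hab ω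
  rcases hσ.1.eq_or_lt with h | h
  · rwa [← h]
  have hsub : Ico a σ ⊆ Icc a b := fun t ht ↦ ⟨ht.1, ht.2.le.trans hσ.2⟩
  refine ((hv σ hσ).mono hsub).closure_le ?_ continuousWithinAt_const fun t ht ↦ ?_
  · rw [closure_Ico h.ne]
    exact right_mem_Icc.2 hσ.1
  · exact (hvu t (hsub ht)).trans (not_le.1 (notMem_of_lt_hittingBtwn ht.2 ht.1)).le

end Hitting

/-- The running supremum `sup_{0 ≤ s ≤ t} f_s` of a process. It is the supremum of an image, because
`⨆ s ∈ Icc 0 t, f s ω` also ranges over the junk value `0` taken at each `s ∉ Icc 0 t`. -/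
noncomputable def runningSup {Ω : Type*} (f : ℝ → Ω → ℝ) (t : ℝ) (ω : Ω) : ℝ :=
  sSup ((f · ω) '' Icc 0 t)

section RunningSup

variable {Ω : Type*} {f : ℝ → Ω → ℝ} {t : ℝ} {ω : Ω}

lemma isGreatest_runningSup (ht : 0 ≤ t) (hf : ContinuousOn (f · ω) (Icc 0 t)) :
    IsGreatest ((f · ω) '' Icc 0 t) (runningSup f t ω) :=
  (isCompact_Icc.image_of_continuousOn hf).isGreatest_sSup ((nonempty_Icc.2 ht).image _)

lemma le_runningSup {s : ℝ} (hf : ContinuousOn (f · ω) (Icc 0 t)) (hs : s ∈ Icc 0 t) :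
    f s ω ≤ runningSup f t ω :=
  (isGreatest_runningSup (hs.1.trans hs.2) hf).2 (mem_image_of_mem _ hs)

lemma le_runningSup_iff {x : ℝ} (ht : 0 ≤ t) (hf : ContinuousOn (f · ω) (Icc 0 t)) :
    x ≤ runningSup f t ω ↔ ∃ s ∈ Icc 0 t, x ≤ f s ω := by
  constructor
  · intro hx
    obtain ⟨s, hs, hsup⟩ := (isGreatest_runningSup ht hf).1
    exact ⟨s, hs, hx.trans_eq hsup.symm⟩
  · rintro ⟨s, hs, hx⟩
    exact hx.trans (le_runningSup hf hs)

lemma runningSup_eq_biSup (hf : ContinuousOn (f · ω) (Icc 0 t))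
    (hf0 : ∀ s ∈ Icc 0 t, 0 ≤ f s ω) : runningSup f t ω = ⨆ s ∈ Icc 0 t, f s ω := by
  refine csSup_image (image_eq_range (f · ω) _ ▸ isCompact_Icc.bddAbove_image hf) ?_
  rw [Real.sSup_empty]
  exact Real.iSup_nonneg fun s ↦ hf0 s s.2

lemma lt_runningSup_iff_exists_rat {y : ℝ} (ht : 0 ≤ t) (hf : ContinuousOn (f · ω) (Icc 0 t)) :
    y < runningSup f t ω ↔ ∃ q : ℚ, (q : ℝ) ∈ Icc 0 t ∧ y < f q ω := by
  constructor
  · intro hy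
    obtain ⟨s, hs, hsup⟩ := (isGreatest_runningSup ht hf).1
    rw [← hsup] at hy
    rcases ht.eq_or_lt with rfl | ht
    · exact ⟨0, by simp, by simpa [le_antisymm hs.2 hs.1] using hy⟩
    have hopen : IsOpen (Ioo 0 t ∩ (f · ω) ⁻¹' Ioi y) :=
      (hf.mono Ioo_subset_Icc_self).isOpen_inter_preimage isOpen_Ioo isOpen_Ioi
    have hne : (Ioo 0 t ∩ (f · ω) ⁻¹' Ioi y).Nonempty := by
      have hcl : s ∈ closure (Ioo 0 t) := by rwa [closure_Ioo ht.ne]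
      have := mem_closure_iff_nhdsWithin_neBot.1 hcl
      have hev : ∀ᶠ r in nhdsWithin s (Ioo 0 t), y < f r ω :=
        ((hf s hs).mono Ioo_subset_Icc_self).eventually_const_lt hy
      exact (eventually_mem_nhdsWithin.and hev).exists
    obtain ⟨q, hq, hyq⟩ := Rat.denseRange_cast.exists_mem_open hopen hne
    exact ⟨q, Ioo_subset_Icc_self hq, hyq⟩
  · rintro ⟨q, hq, hyq⟩
    exact hyq.trans_le (le_runningSup hf hq)

lemma measurable_runningSup {m : MeasurableSpace Ω} {T : ℝ} {τ : Ω → ℝ}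
    (hfc : ∀ ω, ContinuousOn (f · ω) (Icc 0 T)) (hfm : ∀ s ∈ Icc 0 T, Measurable (f s))
    (hτ : Measurable τ) (hτT : ∀ ω, τ ω ∈ Icc 0 T) :
    Measurable fun ω ↦ runningSup f (τ ω) ω := by
  refine measurable_of_Ioi fun y ↦ ?_
  have hpre : (fun ω ↦ runningSup f (τ ω) ω) ⁻¹' Ioi y =
      ⋃ q : ℚ, {ω | (q : ℝ) ∈ Icc 0 (τ ω) ∧ y < f q ω} := by
    ext ω
    simpa using lt_runningSup_iff_exists_rat (hτT ω).1
      ((hfc ω).mono (Icc_subset_Icc_right (hτT ω).2))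
  rw [hpre]
  refine .iUnion fun q ↦ ?_
  by_cases hq : (q : ℝ) ∈ Icc 0 T
  · have hqτ : MeasurableSet {ω | (q : ℝ) ∈ Icc 0 (τ ω)} :=
      (MeasurableSet.const (0 ≤ (q : ℝ))).inter (measurableSet_le measurable_const hτ)
    exact hqτ.inter (measurableSet_lt measurable_const (hfm q hq))
  · convert MeasurableSet.empty
    exact eq_empty_of_forall_notMem fun ω hω ↦ hq (Icc_subset_Icc_right (hτT ω).2 hω.1)

end RunningSup

/-- A real process on `[0, T]` that is adapted and has continuous sample paths; nothing is required
of it at times outside `[0, T]`. -/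
structure ContinuousAdaptedOn {Ω : Type*} {mΩ : MeasurableSpace Ω} (𝓕 : Filtration ℝ mΩ) (T : ℝ)
    (f : ℝ → Ω → ℝ) : Prop where
  continuousOn : ∀ ω, ContinuousOn (f · ω) (Icc 0 T)
  adapted : ∀ t ∈ Icc 0 T, Measurable[𝓕 t] (f t)

namespace ContinuousAdaptedOn

variable {Ω : Type*} {mΩ : MeasurableSpace Ω} {𝓕 : Filtration ℝ mΩ} {T : ℝ} {f g : ℝ → Ω → ℝ}
  {τ : Ω → ℝ}

protected lemma sup (hf : ContinuousAdaptedOn 𝓕 T f) (hg : ContinuousAdaptedOn 𝓕 T g) :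
    ContinuousAdaptedOn 𝓕 T (f ⊔ g) where
  continuousOn ω := (hf.continuousOn ω).sup (hg.continuousOn ω)
  adapted t ht := (hf.adapted t ht).max (hg.adapted t ht)

lemma continuousOn_Icc (hf : ContinuousAdaptedOn 𝓕 T f) {t : ℝ} (ht : t ≤ T) (ω : Ω) :
    ContinuousOn (f · ω) (Icc 0 t) :=
  (hf.continuousOn ω).mono (Icc_subset_Icc_right ht)

protected lemma measurable_runningSup (hf : ContinuousAdaptedOn 𝓕 T f)
    (hτ : IsStoppingTime 𝓕 fun ω ↦ (τ ω : WithTop ℝ)) (hτT : ∀ ω, τ ω ∈ Icc 0 T) :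
    Measurable fun ω ↦ runningSup f (τ ω) ω := by
  have hτ_le (i : ℝ) : MeasurableSet[𝓕 i] {ω | τ ω ≤ i} := by
    simpa only [WithTop.coe_le_coe] using hτ i
  have hτ_meas : Measurable τ := measurable_of_Iic fun i ↦ 𝓕.le i _ (hτ_le i)
  exact measurable_runningSup hf.continuousOn
    (fun t ht ↦ (hf.adapted t ht).mono (𝓕.le t) le_rfl) hτ_meas hτT

lemma measurableSet_exists_le (hf : ContinuousAdaptedOn 𝓕 T f) {t : ℝ} (ht : t ≤ T) (x : ℝ) :
    MeasurableSet[𝓕 t] {ω | ∃ s ∈ Icc 0 t, x ≤ f s ω} := by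
  rcases lt_or_ge t 0 with ht0 | ht0
  · simp [Icc_eq_empty_of_lt ht0]
  simp_rw [← le_runningSup_iff ht0 (hf.continuousOn_Icc ht _)]
  have hfm (s : ℝ) (hs : s ∈ Icc 0 t) : Measurable[𝓕 t] (f s) :=
    (hf.adapted s ⟨hs.1, hs.2.trans ht⟩).mono (𝓕.mono hs.2) le_rfl
  have hmeas : Measurable[𝓕 t] (runningSup f t) :=
    measurable_runningSup (m := 𝓕 t) (hf.continuousOn_Icc ht) hfm
      (@measurable_const _ _ _ (𝓕 t) t) fun _ ↦ right_mem_Icc.2 ht0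
  exact hmeas measurableSet_Ici

lemma isStoppingTime_hittingBtwn_Ici (hf : ContinuousAdaptedOn 𝓕 T f)
    (hτ : IsStoppingTime 𝓕 fun ω ↦ (τ ω : WithTop ℝ)) (hτT : ∀ ω, τ ω ≤ T) (x : ℝ) :
    IsStoppingTime 𝓕 fun ω ↦ ((hittingBtwn f (Ici x) 0 (τ ω) ω : ℝ) : WithTop ℝ) := by
  intro i
  have hτi := hτ i
  simp only [WithTop.coe_le_coe,
    hittingBtwn_le_iff_of_isClosed isClosed_Ici (hf.continuousOn_Icc (hτT _) _)] at hτi ⊢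
  rcases le_total T i with hi | hi
  · simp [(hτT _).trans hi]
  · exact hτi.union (hf.measurableSet_exists_le hi x)

end ContinuousAdaptedOn

section Tail

variable {Ω : Type*} {f g : ℝ → Ω → ℝ} {x : ℝ}

lemma le_apply_hittingBtwn_sup {a : ℝ} {ω : Ω} (ha : 0 ≤ a)
    (hf : ContinuousOn (f · ω) (Icc 0 a)) (hg : ContinuousOn (g · ω) (Icc 0 a))
    (hxf : x ≤ runningSup f a ω) (hgx : runningSup g a ω < x) :
    x ≤ f (hittingBtwn (f ⊔ g) (Ici x) 0 a ω) ω := by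
  obtain ⟨t, ht, hxt⟩ := (le_runningSup_iff ha hf).1 hxf
  have hmax : x ≤ max (f _ ω) (g _ ω) :=
    apply_hittingBtwn_mem_of_isClosed (u := f ⊔ g) isClosed_Ici (hf.sup hg)
      ⟨t, ht, le_max_of_le_left hxt⟩
  have hlt : g (hittingBtwn (f ⊔ g) (Ici x) 0 a ω) ω < x :=
    (le_runningSup hg (hittingBtwn_mem_Icc ha ω)).trans_lt hgx
  exact (le_max_iff.1 hmax).resolve_right hlt.not_ge

lemma mul_measure_le_lintegral_min_runningSup {mΩ : MeasurableSpace Ω} {μ : Measure Ω}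
    {𝓕 : Filtration ℝ mΩ} {T : ℝ} {τ : Ω → ℝ}
    (hf : ContinuousAdaptedOn 𝓕 T f) (hg : ContinuousAdaptedOn 𝓕 T g)
    (hdom : ∀ σ : Ω → ℝ, IsStoppingTime 𝓕 (fun ω ↦ (σ ω : WithTop ℝ)) → (∀ ω, σ ω ∈ Icc 0 T) →
      ∫⁻ ω in {ω | g 0 ω ≤ x}, ENNReal.ofReal (f (σ ω) ω) ∂μ ≤
        ∫⁻ ω in {ω | g 0 ω ≤ x}, ENNReal.ofReal (g (σ ω) ω) ∂μ)
    (hτ : IsStoppingTime 𝓕 fun ω ↦ (τ ω : WithTop ℝ)) (hτT : ∀ ω, τ ω ∈ Icc 0 T) :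
    ENNReal.ofReal x * μ {ω | x ≤ runningSup f (τ ω) ω ∧ runningSup g (τ ω) ω < x} ≤
      ∫⁻ ω, ENNReal.ofReal (min (runningSup g (τ ω) ω) x) ∂μ := by
  have hfτ ω := hf.continuousOn_Icc (hτT ω).2 ω
  have hgτ ω := hg.continuousOn_Icc (hτT ω).2 ω
  have hF := hf.measurable_runningSup hτ hτT
  have hG := hg.measurable_runningSup hτ hτT
  set A := {ω | x ≤ runningSup f (τ ω) ω ∧ runningSup g (τ ω) ω < x}
  have hA : MeasurableSet A :=
    (measurableSet_le measurable_const hF).inter (measurableSet_lt hG measurable_const)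
  set σ : Ω → ℝ := fun ω ↦ hittingBtwn (f ⊔ g) (Ici x) 0 (τ ω) ω
  have hσ : IsStoppingTime 𝓕 fun ω ↦ (σ ω : WithTop ℝ) :=
    (hf.sup hg).isStoppingTime_hittingBtwn_Ici hτ (fun ω ↦ (hτT ω).2) x
  have hστ ω : σ ω ∈ Icc 0 (τ ω) := hittingBtwn_mem_Icc (hτT ω).1 ω
  calc ENNReal.ofReal x * μ A
      = ∫⁻ _ in A, ENNReal.ofReal x ∂μ := (setLIntegral_const _ _).symm
    _ ≤ ∫⁻ ω in A, ENNReal.ofReal (f (σ ω) ω) ∂μ :=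
        setLIntegral_mono' hA fun ω hω ↦ ENNReal.ofReal_le_ofReal <|
          le_apply_hittingBtwn_sup (hτT ω).1 (hfτ ω) (hgτ ω) hω.1 hω.2
    _ ≤ ∫⁻ ω in {ω | g 0 ω ≤ x}, ENNReal.ofReal (f (σ ω) ω) ∂μ :=
        lintegral_mono_set fun ω hω ↦
          (le_runningSup (hgτ ω) (left_mem_Icc.2 (hτT ω).1)).trans hω.2.le
    _ ≤ ∫⁻ ω in {ω | g 0 ω ≤ x}, ENNReal.ofReal (g (σ ω) ω) ∂μ :=
        hdom σ hσ fun ω ↦ Icc_subset_Icc_right (hτT ω).2 (hστ ω)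
    _ ≤ ∫⁻ ω in {ω | g 0 ω ≤ x}, ENNReal.ofReal (min (runningSup g (τ ω) ω) x) ∂μ :=
        setLIntegral_mono (by fun_prop) fun ω hω ↦ ENNReal.ofReal_le_ofReal <|
          le_min (le_runningSup (hgτ ω) (hστ ω)) <|
            apply_hittingBtwn_Ici_le (hτT ω).1 (hgτ ω) (fun _ _ ↦ le_max_right _ _) hω
    _ ≤ ∫⁻ ω, ENNReal.ofReal (min (runningSup g (τ ω) ω) x) ∂μ := setLIntegral_le_lintegral _ _

end Tail

section Moment

lemma lintegral_Ioi_rpow_of_lt {p s : ℝ} (hp : p < -1) (hs : 0 < s) :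
    ∫⁻ x in Ioi s, ENNReal.ofReal (x ^ p) = ENNReal.ofReal (-s ^ (p + 1) / (p + 1)) := by
  rw [← integral_Ioi_rpow_of_lt hp hs]
  refine (ofReal_integral_eq_lintegral_ofReal (integrableOn_Ioi_rpow_of_lt hp hs) ?_).symm
  filter_upwards [ae_restrict_mem measurableSet_Ioi] with x hx
  exact Real.rpow_nonneg (hs.trans hx).le p

lemma lintegral_Ioi_rpow_mul_lintegral_Ioc {p : ℝ} (hp : p < 1) {H : ℝ → ENNReal}
    (hH : Measurable H) :
    ∫⁻ x in Ioi 0, ENNReal.ofReal (x ^ (p - 2)) * ∫⁻ s in Ioc 0 x, H s =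
      ENNReal.ofReal (1 / (1 - p)) * ∫⁻ s in Ioi 0, H s * ENNReal.ofReal (s ^ (p - 1)) := by
  have hK : Measurable (Function.uncurry fun x s : ℝ ↦
      (Iic x).indicator (fun s ↦ ENNReal.ofReal (x ^ (p - 2)) * H s) s) := by
    refine Measurable.indicator (s := {q : ℝ × ℝ | q.2 ≤ q.1})
      (f := fun q ↦ ENNReal.ofReal (q.1 ^ (p - 2)) * H q.2) (by fun_prop) ?_
    exact measurableSet_le measurable_snd measurable_fst
  calc ∫⁻ x in Ioi 0, ENNReal.ofReal (x ^ (p - 2)) * ∫⁻ s in Ioc 0 x, H s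
      = ∫⁻ x in Ioi 0, ∫⁻ s in Ioi 0,
          (Iic x).indicator (fun s ↦ ENNReal.ofReal (x ^ (p - 2)) * H s) s := by
        refine lintegral_congr fun x ↦ ?_
        rw [setLIntegral_indicator measurableSet_Iic, Iic_inter_Ioi, lintegral_const_mul _ hH]
    _ = ∫⁻ s in Ioi 0, ∫⁻ x in Ioi 0,
          (Ici s).indicator (fun x ↦ H s * ENNReal.ofReal (x ^ (p - 2))) x := by
        rw [lintegral_lintegral_swap hK.aemeasurable]
        simp only [indicator, mem_Iic, mem_Ici, mul_comm]
    _ = ∫⁻ s in Ioi 0, ENNReal.ofReal (1 / (1 - p)) * (H s * ENNReal.ofReal (s ^ (p - 1))) := by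
        refine setLIntegral_congr_fun measurableSet_Ioi fun s hs ↦ ?_
        rw [setLIntegral_indicator measurableSet_Ici,
          inter_eq_left.2 (Ici_subset_Ioi.2 hs), setLIntegral_congr Ioi_ae_eq_Ici.symm,
          lintegral_const_mul _ (by fun_prop), lintegral_Ioi_rpow_of_lt (by linarith) hs,
          show -s ^ (p - 2 + 1) / (p - 2 + 1) = 1 / (1 - p) * s ^ (p - 1) by
            rw [show p - 2 + 1 = -(1 - p) by ring, neg_div_neg_eq, neg_sub]; ring,
          ENNReal.ofReal_mul (one_div_nonneg.2 (sub_nonneg.2 hp.le)), mul_left_comm]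
    _ = _ := lintegral_const_mul _ (by fun_prop)

variable {Ω : Type*} {mΩ : MeasurableSpace Ω} {μ : Measure Ω} {F G : Ω → ℝ}

lemma lintegral_ofReal_min_eq_lintegral_Ioc {x : ℝ} (hx : 0 ≤ x) (hG : AEMeasurable G μ)
    (hG0 : 0 ≤ᵐ[μ] G) :
    ∫⁻ ω, ENNReal.ofReal (min (G ω) x) ∂μ = ∫⁻ s in Ioc 0 x, μ {ω | s ≤ G ω} := by
  have hmin0 : 0 ≤ᵐ[μ] fun ω ↦ min (G ω) x := hG0.mono fun ω h ↦ le_min h hx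
  rw [lintegral_eq_lintegral_meas_le μ hmin0 (by fun_prop), ← Iic_inter_Ioi,
    ← setLIntegral_indicator measurableSet_Iic]
  refine lintegral_congr fun s ↦ ?_
  by_cases hs : s ≤ x <;> simp [indicator, hs]

lemma measurable_measure_le (μ : Measure Ω) (G : Ω → ℝ) : Measurable fun s ↦ μ {ω | s ≤ G ω} :=
  Antitone.measurable fun _ _ hst ↦ measure_mono fun _ ↦ hst.trans

lemma measure_le_mul_rpow_le (hG : AEMeasurable G μ) (hG0 : 0 ≤ᵐ[μ] G) {x : ℝ} (hx : 0 < x)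
    (htail : ENNReal.ofReal x * μ {ω | x ≤ F ω ∧ G ω < x} ≤ ∫⁻ ω, ENNReal.ofReal (min (G ω) x) ∂μ)
    (p : ℝ) :
    μ {ω | x ≤ F ω} * ENNReal.ofReal (x ^ (p - 1)) ≤
      μ {ω | x ≤ G ω} * ENNReal.ofReal (x ^ (p - 1)) +
        ENNReal.ofReal (x ^ (p - 2)) * ∫⁻ s in Ioc 0 x, μ {ω | s ≤ G ω} := by
  have hsplit : μ {ω | x ≤ F ω} ≤ μ {ω | x ≤ G ω} + μ {ω | x ≤ F ω ∧ G ω < x} :=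
    (measure_mono fun ω hω ↦ (le_or_gt x (G ω)).imp_right (And.intro hω)).trans
      (measure_union_le _ _)
  have hpow : ENNReal.ofReal (x ^ (p - 1)) = ENNReal.ofReal (x ^ (p - 2)) * ENNReal.ofReal x := by
    rw [← ENNReal.ofReal_mul (by positivity), ← Real.rpow_add_one hx.ne']
    ring_nf
  calc μ {ω | x ≤ F ω} * ENNReal.ofReal (x ^ (p - 1))
      ≤ (μ {ω | x ≤ G ω} + μ {ω | x ≤ F ω ∧ G ω < x}) * ENNReal.ofReal (x ^ (p - 1)) := by gcongr
    _ = μ {ω | x ≤ G ω} * ENNReal.ofReal (x ^ (p - 1)) + ENNReal.ofReal (x ^ (p - 2)) *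
          (ENNReal.ofReal x * μ {ω | x ≤ F ω ∧ G ω < x}) := by
        rw [add_mul, ← mul_assoc, ← hpow, mul_comm (μ {ω | x ≤ F ω ∧ G ω < x})]
    _ ≤ _ := by
        rw [← lintegral_ofReal_min_eq_lintegral_Ioc hx.le hG hG0]
        gcongr

lemma lintegral_rpow_le_of_mul_measure_le (hF : AEMeasurable F μ) (hG : AEMeasurable G μ)
    (hF0 : 0 ≤ᵐ[μ] F) (hG0 : 0 ≤ᵐ[μ] G)
    (htail : ∀ x > 0, ENNReal.ofReal x * μ {ω | x ≤ F ω ∧ G ω < x} ≤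
      ∫⁻ ω, ENNReal.ofReal (min (G ω) x) ∂μ)
    {γ : ℝ} (h0 : 0 < γ) (h1 : γ < 1) :
    ∫⁻ ω, ENNReal.ofReal (F ω ^ γ) ∂μ ≤
      ENNReal.ofReal ((2 - γ) / (1 - γ)) * ∫⁻ ω, ENNReal.ofReal (G ω ^ γ) ∂μ := by
  have hγ : 0 < 1 - γ := sub_pos.2 h1
  have hmeas : Measurable fun x ↦ μ {ω | x ≤ G ω} * ENNReal.ofReal (x ^ (γ - 1)) :=
    (measurable_measure_le μ G).mul (by fun_prop)
  have hconst : 1 + ENNReal.ofReal (1 / (1 - γ)) = ENNReal.ofReal ((2 - γ) / (1 - γ)) := by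
    rw [← ENNReal.ofReal_one, ← ENNReal.ofReal_add zero_le_one (by positivity)]
    congr 1
    field_simp
    ring
  rw [lintegral_rpow_eq_lintegral_meas_le_mul μ hF0 hF h0,
    lintegral_rpow_eq_lintegral_meas_le_mul μ hG0 hG h0]
  calc ENNReal.ofReal γ * ∫⁻ x in Ioi 0, μ {ω | x ≤ F ω} * ENNReal.ofReal (x ^ (γ - 1))
      ≤ ENNReal.ofReal γ * ∫⁻ x in Ioi 0, (μ {ω | x ≤ G ω} * ENNReal.ofReal (x ^ (γ - 1)) +
          ENNReal.ofReal (x ^ (γ - 2)) * ∫⁻ s in Ioc 0 x, μ {ω | s ≤ G ω}) := by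
        gcongr ENNReal.ofReal γ * ?_
        exact setLIntegral_mono' measurableSet_Ioi fun x hx ↦
          measure_le_mul_rpow_le hG hG0 hx (htail x hx) γ
    _ = ENNReal.ofReal γ * ((1 + ENNReal.ofReal (1 / (1 - γ))) *
          ∫⁻ x in Ioi 0, μ {ω | x ≤ G ω} * ENNReal.ofReal (x ^ (γ - 1))) := by
        rw [lintegral_add_left hmeas,
          lintegral_Ioi_rpow_mul_lintegral_Ioc h1 (measurable_measure_le μ G), one_add_mul]
    _ = _ := by rw [hconst, mul_left_comm]

end Moment

theorem lenglart_domination_general {Ω : Type*} {mΩ : MeasurableSpace Ω} (μ : Measure Ω)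
    {𝓕 : Filtration ℝ mΩ} {T : ℝ} {f g : ℝ → Ω → ℝ}
    (hf : ContinuousAdaptedOn 𝓕 T f) (hg : ContinuousAdaptedOn 𝓕 T g)
    (hf0 : ∀ t ∈ Icc 0 T, ∀ ω, 0 ≤ f t ω) (hg0 : ∀ t ∈ Icc 0 T, ∀ ω, 0 ≤ g t ω)
    (hdom : ∀ c > 0, ∀ σ : Ω → ℝ, IsStoppingTime 𝓕 (fun ω ↦ (σ ω : WithTop ℝ)) →
      (∀ ω, σ ω ∈ Icc 0 T) →
      ∫⁻ ω in {ω | g 0 ω ≤ c}, ENNReal.ofReal (f (σ ω) ω) ∂μ ≤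
        ∫⁻ ω in {ω | g 0 ω ≤ c}, ENNReal.ofReal (g (σ ω) ω) ∂μ)
    {τ : Ω → ℝ} (hτ : IsStoppingTime 𝓕 fun ω ↦ (τ ω : WithTop ℝ)) (hτT : ∀ ω, τ ω ∈ Icc 0 T)
    {γ : ℝ} (h0 : 0 < γ) (h1 : γ < 1) :
    ∫⁻ ω, ENNReal.ofReal ((⨆ t ∈ Icc 0 (τ ω), f t ω) ^ γ) ∂μ ≤
      ENNReal.ofReal ((2 - γ) / (1 - γ)) *
        ∫⁻ ω, ENNReal.ofReal ((⨆ t ∈ Icc 0 (τ ω), g t ω) ^ γ) ∂μ := by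
  have hsub ω : Icc 0 (τ ω) ⊆ Icc 0 T := Icc_subset_Icc_right (hτT ω).2
  have hsup {h : ℝ → Ω → ℝ} (hh : ContinuousAdaptedOn 𝓕 T h)
      (hh0 : ∀ t ∈ Icc 0 T, ∀ ω, 0 ≤ h t ω) (ω : Ω) :
      ⨆ t ∈ Icc 0 (τ ω), h t ω = runningSup h (τ ω) ω :=
    (runningSup_eq_biSup (hh.continuousOn_Icc (hτT ω).2 ω)
      fun t ht ↦ hh0 t (hsub ω ht) ω).symm
  have hnonneg {h : ℝ → Ω → ℝ} (hh0 : ∀ t ∈ Icc 0 T, ∀ ω, 0 ≤ h t ω) (ω : Ω) :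
      0 ≤ runningSup h (τ ω) ω := Real.sSup_nonneg <| by
    rintro _ ⟨t, ht, rfl⟩
    exact hh0 t (hsub ω ht) ω
  simp_rw [hsup hf hf0, hsup hg hg0]
  exact lintegral_rpow_le_of_mul_measure_le (hf.measurable_runningSup hτ hτT).aemeasurable
    (hg.measurable_runningSup hτ hτT).aemeasurable
    (.of_forall (hnonneg hf0)) (.of_forall (hnonneg hg0))
    (fun x hx ↦ mul_measure_le_lintegral_min_runningSup hf hg (hdom x hx) hτ hτT) h0 h1

/-- Lemma of Gyöngy–Krylov / Lenglart type. If `f`, `g` are nonnegative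
continuous adapted processes on `[0,T]` such that
`E[f_τ 1_{g_0 ≤ c}] ≤ E[g_τ 1_{g_0 ≤ c}]` for every constant `c > 0` and every stopping
time `τ ≤ T`, then for every stopping time `τ ≤ T` and every `γ ∈ (0,1)`,
`E[sup_{t ≤ τ} f_t^γ] ≤ ((2-γ)/(1-γ)) E[sup_{t ≤ τ} g_t^γ]`. -/
theorem lenglart_domination
    {Ω : Type*} {mΩ : MeasurableSpace Ω} (P : Measure Ω) [IsProbabilityMeasure P]
    (T : ℝ) (hT : 0 ≤ T)
    (𝓕 : Filtration ℝ mΩ)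
    (f g : ℝ → Ω → ℝ)
    -- nonnegativity on [0,T]
    (hf0 : ∀ t ∈ Set.Icc (0:ℝ) T, ∀ ω, 0 ≤ f t ω)
    (hg0 : ∀ t ∈ Set.Icc (0:ℝ) T, ∀ ω, 0 ≤ g t ω)
    -- continuity of sample paths on [0,T]
    (hfc : ∀ ω, ContinuousOn (fun t => f t ω) (Set.Icc 0 T))
    (hgc : ∀ ω, ContinuousOn (fun t => g t ω) (Set.Icc 0 T))
    -- adaptedness on [0,T]
    (hfa : ∀ t ∈ Set.Icc (0:ℝ) T, StronglyMeasurable[𝓕 t] (f t))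
    (hga : ∀ t ∈ Set.Icc (0:ℝ) T, StronglyMeasurable[𝓕 t] (g t))
    -- the domination hypothesis
    (hyp : ∀ c : ℝ, 0 < c → ∀ τ : Ω → ℝ, IsStoppingTime 𝓕 (fun ω => (τ ω : WithTop ℝ)) →
      (∀ ω, τ ω ∈ Set.Icc (0:ℝ) T) →
      ∫⁻ ω in {ω | g 0 ω ≤ c}, ENNReal.ofReal (f (τ ω) ω) ∂P ≤
        ∫⁻ ω in {ω | g 0 ω ≤ c}, ENNReal.ofReal (g (τ ω) ω) ∂P) :
    ∀ τ : Ω → ℝ, IsStoppingTime 𝓕 (fun ω => (τ ω : WithTop ℝ)) → (∀ ω, τ ω ∈ Set.Icc (0:ℝ) T) →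
      ∀ γ : ℝ, 0 < γ → γ < 1 →
      ∫⁻ ω, ENNReal.ofReal ((⨆ t ∈ Set.Icc (0:ℝ) (τ ω), f t ω) ^ γ) ∂P ≤
        ENNReal.ofReal ((2 - γ) / (1 - γ)) *
          ∫⁻ ω, ENNReal.ofReal ((⨆ t ∈ Set.Icc (0:ℝ) (τ ω), g t ω) ^ γ) ∂P :=
  fun _ hτ hτT _ h0 h1 ↦
    lenglart_domination_general P ⟨hfc, fun t ht ↦ (hfa t ht).measurable⟩
      ⟨hgc, fun t ht ↦ (hga t ht).measurable⟩ hf0 hg0 hyp hτ hτT h0 h1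
end

section
/- Let T > 0 and let β : [0,T] × (ℝ^d)^k × ℝ^d → ℝ^d and α : [0,T] × (ℝ^d)^k × ℝ^d → ℝ^{d×m} be Borel measurable and satisfy: for every integer l ≥ 1 there exists a nonnegative integrable function L_l on [0,T] such that 2 (x−z)·(β(t,y,x) − β(t,y,z)) + |α(t,y,x) − α(t,y,z)|² ≤ L_l(t) |x−z|² for all t ∈ [0,T] and all x, z, y with |x| < l, |z| < l, |y| < l. Let (Ω, 𝓕, P) be a probability space and let S : Ω → [0,∞) be an almost surely finite random variable. Then for every R > 0 there exists a jointly measurable function 𝓛 : [0,T] × Ω → [0,∞), with 𝓛(t,·) measurable with respect to σ(S) for every t, such that ∫_0^T 𝓛(t,ω) dt < ∞ for P-almost every ω, and 2 (x−z)·(β(t,y,x) − β(t,y,z)) + |α(t,y,x) − α(t,y,z)|² ≤ 𝓛(t,ω) |x−z|² for all t ∈ [0,T], all x, z with |x| < R, |z| < R, all y with |y| ≤ S(ω), and P-almost every ω. -/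
open MeasureTheory ProbabilityTheory Filter Set
open scoped RealInnerProductSpace

/-!
Let `L l` be the coefficient for the integer radius `l`. At a point where `S = s` take the
coefficient `L l` with `l = max ⌈R⌉ ⌊s⌋ + 1`, an integer that is at least `R` and exceeds `s`.
Since `l` takes countably many values and depends measurably on `s` alone, the resulting coefficient
is jointly measurable in `(t, s)`, and composing it with `S` gives the random coefficient.
-/

section MonotonicityEstimate

variable {E V W : Type*} [SeminormedAddCommGroup V] [InnerProductSpace ℝ V]
  [SeminormedAddCommGroup W]

/-- The monotonicity estimate of condition (C3) at a fixed time, for a drift `b` and a diffusion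
coefficient `a`, with constant `K`, for parameters in `A` and states in `B`. -/
def MonotonicityEstimateOn (b : E → V → V) (a : E → V → W) (K : ℝ) (A : Set E) (B : Set V) :
    Prop :=
  ∀ y x z, x ∈ B → z ∈ B → y ∈ A →
    2 * ⟪x - z, b y x - b y z⟫ + ‖a y x - a y z‖ ^ 2 ≤ K * ‖x - z‖ ^ 2

theorem MonotonicityEstimateOn.mono {b : E → V → V} {a : E → V → W} {K : ℝ} {A A' : Set E}
    {B B' : Set V} (h : MonotonicityEstimateOn b a K A B) (hA : A' ⊆ A) (hB : B' ⊆ B) :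
    MonotonicityEstimateOn b a K A' B' :=
  fun y x z hx hz hy => h y x z (hB hx) (hB hz) (hA hy)

end MonotonicityEstimate

theorem measurable_apply_of_countable_index {ι τ Ω F : Type*} [Countable ι] [MeasurableSpace ι]
    [MeasurableSingletonClass ι] [MeasurableSpace τ] [MeasurableSpace Ω] [MeasurableSpace F]
    {L : ι → τ → F} (hL : ∀ i, Measurable (L i)) {N : Ω → ι} (hN : Measurable N) :
    Measurable fun p : τ × Ω => L (N p.2) p.1 :=
  (measurable_from_prod_countable_left (f := fun p : τ × ι => L p.2 p.1) hL).comp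
    (measurable_fst.prodMk (hN.comp measurable_snd))

section LocalMonotonicity

variable {τ E V W : Type*} [MeasurableSpace τ] [SeminormedAddCommGroup E]
  [SeminormedAddCommGroup V] [InnerProductSpace ℝ V] [SeminormedAddCommGroup W]

/-- The local monotonicity condition (C3) on the time set `I`: for each integer radius `l ≥ 1`, the
monotonicity estimate holds on the open balls of radius `l` with a nonnegative time-dependent
coefficient that is `μ`-integrable over `I`. The coefficient is measurable everywhere rather than
`μ`-almost everywhere, so that choosing `l` at random preserves joint measurability. -/
def LocallyMonotoneOn (μ : Measure τ) (I : Set τ) (β : τ → E → V → V) (α : τ → E → V → W) : Prop :=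
  ∀ l : ℕ, 1 ≤ l → ∃ L : τ → ℝ, Measurable L ∧ (∀ t, 0 ≤ L t) ∧ IntegrableOn L I μ ∧
    ∀ t ∈ I, MonotonicityEstimateOn (β t) (α t) (L t) {y | ‖y‖ < l} {x | ‖x‖ < l}

variable {μ : Measure τ} {I : Set τ} {β : τ → E → V → V} {α : τ → E → V → W}

theorem LocallyMonotoneOn.exists_measurable_coefficient (h : LocallyMonotoneOn μ I β α) (R : ℝ) :
    ∃ K : τ → ℝ → ℝ, (∀ t s, 0 ≤ K t s) ∧ (Measurable fun p : τ × ℝ => K p.1 p.2) ∧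
      (∀ s, IntegrableOn (fun t => K t s) I μ) ∧
      ∀ s, ∀ t ∈ I,
        MonotonicityEstimateOn (β t) (α t) (K t s) {y | ‖y‖ ≤ s} {x | ‖x‖ < R} := by
  choose L hLm hL0 hLi hLe using fun n : ℕ => h (n + 1) n.succ_pos
  let N : ℝ → ℕ := fun s => max ⌈R⌉₊ ⌊s⌋₊
  have hN : Measurable N := measurable_const.max Nat.measurable_floor
  have hRN (s : ℝ) : R ≤ (N s + 1 : ℕ) :=
    Nat.ceil_le.mp ((le_max_left _ _).trans (Nat.le_succ _))
  have hsN (s : ℝ) : s < (N s + 1 : ℕ) :=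
    Nat.lt_of_floor_lt (Nat.lt_succ_of_le (le_max_right _ _))
  refine ⟨fun t s => L (N s) t, fun t s => hL0 _ t, measurable_apply_of_countable_index hLm hN,
    fun s => hLi (N s), fun s t ht => ?_⟩
  exact (hLe (N s) t ht).mono (fun _ hy => hy.trans_lt (hsN s)) fun _ hx => hx.trans_le (hRN s)

theorem randomized_monotonicity_C3_general (h : LocallyMonotoneOn μ I β α) {Ω : Type*}
    [MeasurableSpace Ω] {S : Ω → ℝ} (hS : Measurable S) (R : ℝ) :
    ∃ 𝓛 : τ → Ω → ℝ, (∀ t ω, 0 ≤ 𝓛 t ω) ∧ (Measurable fun p : τ × Ω => 𝓛 p.1 p.2) ∧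
      (∀ t, Measurable[MeasurableSpace.comap S Real.measurableSpace] (𝓛 t)) ∧
      (∀ ω, IntegrableOn (fun t => 𝓛 t ω) I μ) ∧
      ∀ ω, ∀ t ∈ I,
        MonotonicityEstimateOn (β t) (α t) (𝓛 t ω) {y | ‖y‖ ≤ S ω} {x | ‖x‖ < R} := by
  obtain ⟨K, hK0, hKm, hKi, hKe⟩ := h.exists_measurable_coefficient R
  exact ⟨fun t ω => K t (S ω), fun t ω => hK0 t (S ω),
    hKm.comp (measurable_fst.prodMk (hS.comp measurable_snd)),
    fun t => (hKm.comp measurable_prodMk_left).comp (comap_measurable S),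
    fun ω => hKi (S ω), fun ω => hKe (S ω)⟩

end LocalMonotonicity

/-- randomization of the local monotonicity condition (C3). If for
every integer `l ≥ 1` there is a nonnegative integrable `L_l` with
`2(x−z)·(β(t,y,x)−β(t,y,z)) + |α(t,y,x)−α(t,y,z)|² ≤ L_l(t)|x−z|²` for `|x|,|z|,|y| < l`,
and `S` is a nonnegative (a.s. finite) random variable, then for every `R > 0` there is a
jointly measurable, σ(S)-measurable-in-ω, a.s. integrable-in-t random coefficient
`𝓛(t,ω)` for which the same monotonicity estimate holds for `|x|,|z| < R`, `|y| ≤ S(ω)`,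
almost surely. -/
theorem randomized_monotonicity_C3
    {Ω : Type*} [MeasureSpace Ω] [IsProbabilityMeasure (ℙ : Measure Ω)]
    (d k m : ℕ) (T : ℝ) (hT : 0 < T)
    (β : ℝ → EuclideanSpace ℝ (Fin k × Fin d) → EuclideanSpace ℝ (Fin d) →
      EuclideanSpace ℝ (Fin d))
    (α : ℝ → EuclideanSpace ℝ (Fin k × Fin d) → EuclideanSpace ℝ (Fin d) →
      EuclideanSpace ℝ (Fin d × Fin m))
    (hβm : Measurable fun p : ℝ × EuclideanSpace ℝ (Fin k × Fin d) ×
      EuclideanSpace ℝ (Fin d) => β p.1 p.2.1 p.2.2)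
    (hαm : Measurable fun p : ℝ × EuclideanSpace ℝ (Fin k × Fin d) ×
      EuclideanSpace ℝ (Fin d) => α p.1 p.2.1 p.2.2)
    -- the local monotonicity condition (C3), for integer radii l ≥ 1
    (hL : ∀ l : ℕ, 1 ≤ l → ∃ L : ℝ → ℝ, Measurable L ∧ (∀ t, 0 ≤ L t) ∧
      IntegrableOn L (Set.Icc 0 T) ∧
      ∀ t ∈ Set.Icc (0:ℝ) T, ∀ y x z, ‖x‖ < (l:ℝ) → ‖z‖ < (l:ℝ) → ‖y‖ < (l:ℝ) →
        2 * ⟪x - z, β t y x - β t y z⟫ + ‖α t y x - α t y z‖ ^ 2 ≤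
          L t * ‖x - z‖ ^ 2)
    -- the almost surely finite nonnegative random variable S
    (S : Ω → ℝ) (hS : ∀ ω, 0 ≤ S ω) (hSm : Measurable S) :
    ∀ R : ℝ, 0 < R → ∃ 𝓛 : ℝ → Ω → ℝ, (∀ t ω, 0 ≤ 𝓛 t ω) ∧
      (Measurable fun p : ℝ × Ω => 𝓛 p.1 p.2) ∧
      (∀ t, Measurable[MeasurableSpace.comap S Real.measurableSpace] (𝓛 t)) ∧
      (∀ᵐ ω ∂(ℙ : Measure Ω), IntegrableOn (fun t => 𝓛 t ω) (Set.Icc 0 T)) ∧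
      (∀ᵐ ω ∂(ℙ : Measure Ω), ∀ t ∈ Set.Icc (0:ℝ) T, ∀ y x z,
        ‖x‖ < R → ‖z‖ < R → ‖y‖ ≤ S ω →
        2 * ⟪x - z, β t y x - β t y z⟫ + ‖α t y x - α t y z‖ ^ 2 ≤
          𝓛 t ω * ‖x - z‖ ^ 2) := by
  intro R _
  obtain ⟨𝓛, h0, hm, hσ, hi, he⟩ := randomized_monotonicity_C3_general hL hSm R
  exact ⟨𝓛, h0, hm, hσ, .of_forall hi, .of_forall he⟩
end
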